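/- Let δ ≥ e be a real number and let s be a real number with 0 ≤ s ≤ 1. Then (δ+1)/ln δ + s·δ^s − δ^s/ln δ ≤ (δ/(e·ln δ))·(e^{δ^{−s}}/δ^{−s}). -/

import Mathlib

/-!
Put `x = δ ^ (-s)` and `w = x - 1 - log x ≥ 0`. Multiplied by `log δ`, the two sides of the
inequality become `δ + x⁻¹ * w` and `δ * exp w`. Since `x⁻¹ = δ ^ s ≤ δ`, it suffices that
`1 + w ≤ exp w`.
-/

open Real

lemma sub_log_le_exp_sub_one_div {x : ℝ} (hx : 0 < x) : x - log x ≤ exp (x - 1) / x :=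
  calc x - log x = x - 1 - log x + 1 := by ring
    _ ≤ exp (x - 1 - log x) := add_one_le_exp _
    _ = exp (x - 1) / x := by rw [exp_sub, exp_log hx]

lemma add_one_sub_inv_sub_inv_mul_log_le {x c : ℝ} (hx : 0 < x) (hc : x⁻¹ ≤ c) :
    c + 1 - x⁻¹ - x⁻¹ * log x ≤ c * (exp (x - 1) / x) := by
  have excess_nonneg : 0 ≤ x - log x - 1 := by linarith [log_le_sub_one_of_pos hx]
  have hc₀ : 0 ≤ c := (inv_pos.2 hx).le.trans hc
  calc c + 1 - x⁻¹ - x⁻¹ * log x = c + x⁻¹ * (x - log x - 1) := by field_simp; ring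
    _ ≤ c + c * (x - log x - 1) := by gcongr
    _ = c * (x - log x) := by ring
    _ ≤ c * (exp (x - 1) / x) := by gcongr; exact sub_log_le_exp_sub_one_div hx

theorem rand_rob4_2_general {δ s : ℝ} (hδ : 1 < δ) (hs : s ≤ 1) :
    (δ + 1) / log δ + s * δ ^ s - δ ^ s / log δ ≤
      δ / (exp 1 * log δ) * (exp (δ ^ (-s)) / δ ^ (-s)) := by
  have hδ₀ : 0 < δ := one_pos.trans hδ
  have hlog : 0 < log δ := log_pos hδ
  have hx : 0 < δ ^ (-s) := rpow_pos_of_pos hδ₀ _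
  have inv_eq : (δ ^ (-s))⁻¹ = δ ^ s := by rw [rpow_neg hδ₀.le, inv_inv]
  have pow_le : δ ^ s ≤ δ := rpow_le_self_of_one_le hδ.le hs
  calc (δ + 1) / log δ + s * δ ^ s - δ ^ s / log δ
      = (δ + 1 - (δ ^ (-s))⁻¹ - (δ ^ (-s))⁻¹ * log (δ ^ (-s))) / log δ := by
        rw [inv_eq, log_rpow hδ₀]; field_simp; ring
    _ ≤ δ * (exp (δ ^ (-s) - 1) / δ ^ (-s)) / log δ := by
        gcongr
        exact add_one_sub_inv_sub_inv_mul_log_le hx (inv_eq.trans_le pow_le)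
    _ = δ / (exp 1 * log δ) * (exp (δ ^ (-s)) / δ ^ (-s)) := by
        rw [exp_sub]; field_simp

theorem rand_rob4_2 (δ s : ℝ) (hδ : Real.exp 1 ≤ δ) (hs0 : 0 ≤ s) (hs1 : s ≤ 1) :
    (δ + 1) / Real.log δ + s * δ ^ s - δ ^ s / Real.log δ ≤
      δ / (Real.exp 1 * Real.log δ) * (Real.exp (δ ^ (-s)) / δ ^ (-s)) :=
  rand_rob4_2_general ((one_lt_exp_iff.2 one_pos).trans_le hδ) hs1
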